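/- arXiv:1510.08740 — 3 statements merged into one kernel-verified Lean document; each statement's English description precedes it below -/
import Mathlib

section
/- Let H be a real Hilbert space, Ψ : H → ℝ ∪ {+∞} proper, lower-semicontinuous and convex, and Φ : H → ℝ convex and continuously differentiable with L-Lipschitz continuous gradient. Suppose S = argmin(Ψ + Φ) is nonempty, and let (x_k) be generated by the accelerated forward-backward algorithm with parameter α > 3 and step size 0 < s < 1/L. Then the sequence (x_k) converges weakly to a point of S. -/
open Filter RealInnerProductSpace

lemma aux_lim {E a : ℕ → ℝ} (hE : ∀ n, 0 ≤ E n) (ha : ∀ n, 0 ≤ a n)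
    (h : ∀ n, E (n + 1) + a n ≤ E n) : Summable a ∧ ∃ l, Tendsto E atTop (nhds l) := by
  constructor
  · have key : ∀ n, ∑ i ∈ Finset.range n, a i ≤ E 0 - E n := by
      intro n
      induction n with
      | zero => simp
      | succ k ih => rw [Finset.sum_range_succ]; linarith [h k]
    exact summable_of_sum_range_le ha (c := E 0) (fun n => by linarith [key n, hE n])
  · exact ⟨_, tendsto_atTop_ciInf (antitone_nat_of_succ_le fun n => by linarith [h n, ha n])
      ⟨0, by rintro _ ⟨n, rfl⟩; exact hE n⟩⟩

lemma aux_lim2 {F b e : ℕ → ℝ} (hF : ∀ n, 0 ≤ F n) (hb : ∀ n, 0 ≤ b n) (he : ∀ n, 0 ≤ e n)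
    (hes : Summable e) (h : ∀ n, F (n + 1) + b n ≤ F n + e n) :
    Summable b ∧ ∃ l, Tendsto F atTop (nhds l) := by
  have h1 : ∀ n, ∑ i ∈ Finset.range n, e i ≤ ∑' i, e i :=
    fun n => hes.sum_le_tsum _ (fun i _ => he i)
  obtain ⟨hs, l, hl⟩ := aux_lim (E := fun n => F n - ∑ i ∈ Finset.range n, e i + ∑' i, e i) (a := b)
    (fun n => by have := h1 n; have := hF n; linarith) hb
    (fun n => by have := h n; simp only [Finset.sum_range_succ]; linarith)
  have h2 := (hl.add hes.hasSum.tendsto_sum_nat).sub_const (∑' i, e i)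
  refine ⟨hs, _, h2.congr fun n => ?_⟩
  ring

lemma aux_zero {F t : ℕ → ℝ} {l r : ℝ} (hr : 1 ≤ r) (ht0 : 1 ≤ t 0) (ht : ∀ n, t (n + 1) = t n + 1 / r)
    (hF : ∀ n, 0 ≤ F n) (hl : Tendsto F atTop (nhds l))
    (hs : Summable fun n => F n / t n) : l = 0 := by
  have hl0 : 0 ≤ l := ge_of_tendsto' hl hF
  by_contra hne
  have hlp : 0 < l := lt_of_le_of_ne hl0 (Ne.symm hne)
  have htn : ∀ n, 1 ≤ t n ∧ t n ≤ t 0 * (n + 1) := by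
    intro n
    have : 0 < 1 / r := by positivity
    have h1 : 1 / r ≤ 1 := by rw [div_le_one (by linarith)]; exact hr
    induction n with
    | zero => simp [ht0]
    | succ k ih =>
      rw [ht]; push_cast
      obtain ⟨ih1, ih2⟩ := ih
      constructor
      · linarith
      · linarith
  have hev : ∀ᶠ n in atTop, l / 2 < F n := hl.eventually_const_lt (by linarith)
  have h2 : Summable (fun n : ℕ => (1 : ℝ) / ((n + 1 : ℕ) : ℝ)) := by
    have h3 : Summable (fun n => (2 * t 0 / l) * (F n / t n)) := hs.mul_left _
    refine summable_of_isBigO_nat h3 ?_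
    refine Asymptotics.IsBigO.of_bound 1 ?_
    filter_upwards [hev] with n hn
    have ⟨h4, h5⟩ := htn n
    have hFn := hF n
    rw [Real.norm_of_nonneg (by positivity), Real.norm_of_nonneg (by positivity), one_mul]
    rw [div_mul_div_comm, div_le_div_iff₀ (by positivity) (by positivity)]
    push_cast
    have h6 : l * t n ≤ l * (t 0 * (n + 1)) := by gcongr
    have h7 : (t 0 * (n + 1)) * (l / 2) ≤ (t 0 * (n + 1)) * F n := by gcongr
    nlinarith
  exact Real.not_summable_one_div_natCast ((summable_nat_add_iff 1).1 h2)

section core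
variable {H : Type*} [NormedAddCommGroup H] [InnerProductSpace ℝ H]

lemma core_energy (x x1 y z v : H) (t : ℝ) (hv : t • y - (t - 1) • x = v) :
    (t ^ 2 - t) * (‖y - x‖ ^ 2 - ‖x1 - x‖ ^ 2) + t * (‖y - z‖ ^ 2 - ‖x1 - z‖ ^ 2)
      = ‖v - z‖ ^ 2 - ‖t • x1 - (t - 1) • x - z‖ ^ 2 := by
  subst hv
  simp only [← real_inner_self_eq_norm_sq, inner_sub_left, inner_sub_right, real_inner_smul_left,
    real_inner_smul_right]
  rw [real_inner_comm x y, real_inner_comm x x1, real_inner_comm z x, real_inner_comm z y,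
    real_inner_comm z x1]
  ring

lemma core {X Y : ℕ → H} {θ t : ℕ → ℝ} {r s : ℝ} (hs : 0 < s) (hr : 2 < r) (ht0 : 1 ≤ t 0)
    (ht : ∀ n, t (n + 1) = t n + 1 / r) (hθ : ∀ n, 0 ≤ θ n)
    (hY : ∀ n, t (n + 1) • (Y n - X (n + 1)) = (t n - 1) • (X (n + 1) - X n))
    (hB : ∀ n, 2 * s * (θ (n + 1) - θ n) ≤ ‖Y n - X (n + 1)‖ ^ 2 - ‖X (n + 2) - X (n + 1)‖ ^ 2)
    (z : H) (hA : ∀ n, 2 * s * θ (n + 1) ≤ ‖Y n - z‖ ^ 2 - ‖X (n + 2) - z‖ ^ 2) :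
    Tendsto θ atTop (nhds 0) ∧ ∃ l, Tendsto (fun n => ‖X n - z‖) atTop (nhds l) := by
  have hri : 0 < 1 / r := by positivity
  have hri1 : 1 / r < 1 / 2 := by rw [div_lt_div_iff₀] <;> linarith
  have ht1 : ∀ n, 1 ≤ t n := by
    intro n
    induction n with
    | zero => exact ht0
    | succ k ih => rw [ht]; linarith
  set v : ℕ → H := fun n => t n • X (n + 1) - (t n - 1) • X n with hvdef
  have hv : ∀ n, t (n + 1) • Y n - (t (n + 1) - 1) • X (n + 1) = v n := by
    intro n
    have h1 := hY n
    simp only [hvdef]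
    have : t (n + 1) • Y n = (t n - 1) • (X (n + 1) - X n) + t (n + 1) • X (n + 1) := by
      rw [← h1]; module
    rw [this]; module
  have hE : ∀ n, (‖v (n + 1) - z‖ ^ 2 + 2 * s * t (n + 1) ^ 2 * θ (n + 1))
      + 2 * s * (1 - 2 * (1 / r)) * (t n * θ n) ≤ ‖v n - z‖ ^ 2 + 2 * s * t n ^ 2 * θ n := by
    intro n
    have h1 := core_energy (X (n + 1)) (X (n + 2)) (Y n) z (v n) (t (n + 1)) (hv n)
    have h2 : t (n + 1) • X (n + 2) - (t (n + 1) - 1) • X (n + 1) - z = v (n + 1) - z := rfl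
    rw [h2] at h1
    have h3 := ht1 (n + 1)
    have h4 := mul_le_mul_of_nonneg_left (hB n)
      (show 0 ≤ t (n + 1) ^ 2 - t (n + 1) by nlinarith)
    have h5 := mul_le_mul_of_nonneg_left (hA n) (show 0 ≤ t (n + 1) by linarith)
    have h6 : t (n + 1) ^ 2 - t (n + 1) ≤ t n ^ 2 - (1 - 2 * (1 / r)) * t n := by
      rw [ht]; nlinarith
    have h7 := mul_le_mul_of_nonneg_left h6 (show 0 ≤ 2 * s * θ n from by
      have := hθ n; positivity)
    nlinarith
  have hc : 0 < 2 * s * (1 - 2 * (1 / r)) := by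
    have : 0 < 1 - 2 * (1 / r) := by linarith
    positivity
  have htθ : ∀ n, 0 ≤ t n * θ n := fun n => mul_nonneg (by linarith [ht1 n]) (hθ n)
  obtain ⟨hS, lE, hlE⟩ := aux_lim
    (E := fun n => ‖v n - z‖ ^ 2 + 2 * s * t n ^ 2 * θ n)
    (a := fun n => 2 * s * (1 - 2 * (1 / r)) * (t n * θ n))
    (fun n => by have := hθ n; positivity) (fun n => mul_nonneg hc.le (htθ n)) hE
  have hS' : Summable fun n => t n * θ n := (summable_mul_left_iff hc.ne').1 hS
  -- second energy
  set d : ℕ → ℝ := fun n => ‖X (n + 1) - X n‖ ^ 2 with hd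
  have hd0 : ∀ n, 0 ≤ d n := fun n => by positivity
  have hF : ∀ n, (t (n + 1) ^ 2 * (d (n + 1) + 2 * s * θ (n + 1))) + t n * d n
      ≤ t n ^ 2 * (d n + 2 * s * θ n) + 4 * s * (t n * θ n) := by
    intro n
    have h1 : t (n + 1) ^ 2 * ‖Y n - X (n + 1)‖ ^ 2 = (t n - 1) ^ 2 * d n := by
      have := congrArg (fun w => ‖w‖ ^ 2) (hY n)
      simpa [norm_smul, mul_pow, hd] using this
    have h2 := mul_le_mul_of_nonneg_left (hB n) (sq_nonneg (t (n + 1)))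
    have h3 : ‖X (n + 2) - X (n + 1)‖ ^ 2 = d (n + 1) := rfl
    rw [h3, mul_sub _ (‖Y n - X (n + 1)‖ ^ 2), h1] at h2
    have h4 : (t n - 1) ^ 2 * d n ≤ (t n ^ 2 - t n) * d n :=
      mul_le_mul_of_nonneg_right (by nlinarith [ht1 n]) (hd0 n)
    have h6 : t (n + 1) ^ 2 ≤ t n ^ 2 + 2 * t n := by
      rw [ht]; nlinarith [ht1 n]
    have h7 := mul_le_mul_of_nonneg_left h6 (show 0 ≤ 2 * s * θ n from by
      have := hθ n; positivity)
    nlinarith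
  obtain ⟨hS2, lF, hlF⟩ := aux_lim2 (F := fun n => t n ^ 2 * (d n + 2 * s * θ n))
    (b := fun n => t n * d n) (e := fun n => 4 * s * (t n * θ n))
    (fun n => by have := hθ n; have := hd0 n; positivity)
    (fun n => mul_nonneg (by linarith [ht1 n]) (hd0 n))
    (fun n => by have := htθ n; positivity) (hS'.mul_left _) hF
  have hlF0 : lF = 0 := by
    refine aux_zero (by linarith) ht0 ht (fun n => ?_) hlF ?_
    · have := hθ n; have := hd0 n; positivity
    · refine (hS2.add (hS'.mul_left (2 * s))).congr fun n => ?_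
      have : t n ≠ 0 := by linarith [ht1 n]
      field_simp
  subst hlF0
  have hθt : Tendsto (fun n => 2 * s * t n ^ 2 * θ n) atTop (nhds 0) := by
    refine squeeze_zero (fun n => by have := hθ n; positivity) (fun n => ?_) hlF
    have := mul_nonneg (sq_nonneg (t n)) (hd0 n)
    linarith
  have hdt : Tendsto (fun n => t n ^ 2 * d n) atTop (nhds 0) := by
    refine squeeze_zero (fun n => mul_nonneg (sq_nonneg _) (hd0 n)) (fun n => ?_) hlF
    have : 0 ≤ 2 * s * t n ^ 2 * θ n := by have := hθ n; positivity
    linarith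
  have hv2 : Tendsto (fun n => ‖v n - z‖ ^ 2) atTop (nhds lE) := by
    simpa using hlE.sub hθt
  have hv3 : Tendsto (fun n => ‖v n - z‖) atTop (nhds (√lE)) := by
    simpa using hv2.sqrt
  have hvx : Tendsto (fun n => ‖v n - X (n + 1)‖) atTop (nhds 0) := by
    have h1 : Tendsto (fun n => √(t n ^ 2 * d n)) atTop (nhds 0) := by simpa using hdt.sqrt
    refine squeeze_zero (fun n => norm_nonneg _) (fun n => ?_) h1
    apply Real.le_sqrt_of_sq_le
    have h2 : v n - X (n + 1) = (t n - 1) • (X (n + 1) - X n) := by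
      simp only [hvdef]; module
    rw [h2, norm_smul, mul_pow, Real.norm_eq_abs, sq_abs]
    exact mul_le_mul_of_nonneg_right (by nlinarith [ht1 n]) (hd0 n)
  refine ⟨?_, √lE, ?_⟩
  · have h1 : Tendsto (fun n => (2 * s * t n ^ 2 * θ n) / (2 * s)) atTop (nhds 0) := by
      simpa using hθt.div_const (2 * s)
    refine squeeze_zero hθ (fun n => ?_) h1
    rw [le_div_iff₀ (by positivity)]
    have : 1 ≤ t n ^ 2 := by nlinarith [ht1 n]
    have := mul_le_mul_of_nonneg_right this (show 0 ≤ 2 * s * θ n from by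
      have := hθ n; positivity)
    linarith
  · rw [← tendsto_add_atTop_iff_nat 1]
    have h1 : Tendsto (fun n => ‖X (n + 1) - z‖ - ‖v n - z‖) atTop (nhds 0) := by
      refine squeeze_zero_norm (fun n => ?_) hvx
      have := abs_norm_sub_norm_le (X (n + 1) - z) (v n - z)
      rw [Real.norm_eq_abs]
      refine this.trans (le_of_eq ?_)
      rw [norm_sub_rev]; congr 1; abel
    simpa using h1.add hv3

end core

section B
variable {H : Type*} [NormedAddCommGroup H] [InnerProductSpace ℝ H] [CompleteSpace H]

lemma weak_ultra {x : ℕ → H} {R : ℝ} (hR : ∀ n, ‖x n‖ ≤ R) (U : Ultrafilter ℕ) :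
    ∃ p : H, ∀ v : H, Tendsto (fun n => ⟪x n, v⟫) (U : Filter ℕ) (nhds ⟪p, v⟫) := by
  let f : ℕ → WeakDual ℝ H := fun n => StrongDual.toWeakDual (InnerProductSpace.toDual ℝ H (x n))
  have hc := WeakDual.isCompact_closedBall (0 : StrongDual ℝ H) R
  obtain ⟨φ, -, hφ⟩ := hc.ultrafilter_le_nhds' (U.map f) (by
    rw [Ultrafilter.mem_map]
    filter_upwards with n
    simp only [Set.mem_preimage, Metric.mem_closedBall, dist_zero_right]
    change ‖InnerProductSpace.toDual ℝ H (x n)‖ ≤ R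
    rw [LinearIsometryEquiv.norm_map]; exact hR n)
  refine ⟨(InnerProductSpace.toDual ℝ H).symm (WeakDual.toStrongDual φ), fun v => ?_⟩
  rw [InnerProductSpace.toDual_symm_apply]
  have h1 : Tendsto f U (nhds φ) := hφ
  have h2 := ((WeakDual.eval_continuous v).tendsto φ).comp h1
  exact h2

lemma opial {x : ℕ → H} {S : Set H} (z : H) (hz : z ∈ S)
    (h1 : ∀ z ∈ S, ∃ l, Tendsto (fun n => ‖x n - z‖) atTop (nhds l))
    (h2 : ∀ (U : Ultrafilter ℕ) (p : H), (U : Filter ℕ) ≤ atTop →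
      (∀ v : H, Tendsto (fun n => ⟪x n, v⟫) (U : Filter ℕ) (nhds ⟪p, v⟫)) → p ∈ S) :
    ∃ p ∈ S, ∀ v : H, Tendsto (fun n => ⟪x n, v⟫) atTop (nhds ⟪p, v⟫) := by
  obtain ⟨R, hR⟩ : ∃ R, ∀ n, ‖x n‖ ≤ R := by
    obtain ⟨l, hl⟩ := h1 z hz
    obtain ⟨R, hR⟩ := hl.bddAbove_range
    refine ⟨R + ‖z‖, fun n => ?_⟩
    have h3 := hR ⟨n, rfl⟩
    have h4 := norm_le_norm_sub_add (x n) z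
    simp only at h3
    linarith
  have hU0 : ((Ultrafilter.of (atTop : Filter ℕ) : Ultrafilter ℕ) : Filter ℕ) ≤ atTop :=
    Ultrafilter.of_le _
  obtain ⟨p, hp⟩ := weak_ultra hR (Ultrafilter.of (atTop : Filter ℕ))
  have hpS := h2 _ p hU0 hp
  refine ⟨p, hpS, fun v => ?_⟩
  rw [tendsto_iff_ultrafilter]
  intro V hV
  obtain ⟨q, hq⟩ := weak_ultra hR V
  have hqS := h2 _ q hV hq
  suffices p = q by rw [this]; exact hq v
  obtain ⟨a, ha⟩ := h1 p hpS
  obtain ⟨b, hb⟩ := h1 q hqS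
  have h3 : Tendsto (fun n => ⟪x n, p - q⟫) atTop
      (nhds ((‖p‖ ^ 2 - ‖q‖ ^ 2 - (a ^ 2 - b ^ 2)) / 2)) := by
    refine ((((ha.pow 2).sub (hb.pow 2)).const_sub (‖p‖ ^ 2 - ‖q‖ ^ 2)).div_const 2).congr
      fun n => ?_
    rw [norm_sub_sq_real, norm_sub_sq_real, inner_sub_right]; ring
  have h4 := tendsto_nhds_unique (hp (p - q)) (h3.mono_left hU0)
  have h5 := tendsto_nhds_unique (hq (p - q)) (h3.mono_left hV)
  have h6 : ⟪p - q, p - q⟫ = 0 := by rw [inner_sub_left, h4, h5, sub_self]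
  exact sub_eq_zero.1 (inner_self_eq_zero.1 h6)

lemma weak_mem {x : ℕ → H} {C : Set H} (hC : Convex ℝ C) (hcl : IsClosed C) {U : Ultrafilter ℕ}
    {p : H} (hx : ∀ᶠ n in (U : Filter ℕ), x n ∈ C)
    (hp : ∀ v : H, Tendsto (fun n => ⟪x n, v⟫) (U : Filter ℕ) (nhds ⟪p, v⟫)) : p ∈ C := by
  by_contra hpC
  obtain ⟨f, u, hf, hu⟩ := geometric_hahn_banach_closed_point hC hcl hpC
  have key : ∀ w, f w = ⟪w, (InnerProductSpace.toDual ℝ H).symm f⟫ := fun w => by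
    rw [real_inner_comm, InnerProductSpace.toDual_symm_apply]
  have h1 := hp ((InnerProductSpace.toDual ℝ H).symm f)
  simp only [← key] at h1
  exact absurd (le_of_tendsto h1 (hx.mono fun n hn => (hf _ hn).le)) (not_le.2 hu)

lemma line_deriv {Φ : H → ℝ} {Φ' : H → H} (hΦ_diff : ∀ u, HasGradientAt Φ (Φ' u) u)
    (y d : H) (τ : ℝ) : HasDerivAt (fun τ : ℝ => Φ (y + τ • d)) ⟪Φ' (y + τ • d), d⟫ τ := by
  have h1 : HasDerivAt (fun τ : ℝ => y + τ • d) d τ := by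
    simpa using ((hasDerivAt_id τ).smul_const d).const_add y
  have h2 := (hΦ_diff (y + τ • d)).hasFDerivAt.comp_hasDerivAt τ h1
  simp only [InnerProductSpace.toDual_apply_apply] at h2
  exact h2

lemma grad_ineq {Φ : H → ℝ} {Φ' : H → H} (hΦ_convex : ConvexOn ℝ Set.univ Φ)
    (hΦ_diff : ∀ u, HasGradientAt Φ (Φ' u) u) (y u : H) :
    Φ y + ⟪Φ' y, u - y⟫ ≤ Φ u := by
  have h1 := line_deriv hΦ_diff y (u - y) 0
  have h2 : ConvexOn ℝ Set.univ (fun τ : ℝ => Φ (y + τ • (u - y))) := by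
    have := hΦ_convex.comp_affineMap (AffineMap.lineMap y u : ℝ →ᵃ[ℝ] H)
    have h5 : (fun τ : ℝ => Φ (y + τ • (u - y))) = Φ ∘ (AffineMap.lineMap y u : ℝ →ᵃ[ℝ] H) := by
      ext τ
      simp [AffineMap.lineMap_apply, add_comm]
    rw [h5]; exact this
  have h3 := h2.le_slope_of_hasDerivAt (Set.mem_univ 0) (Set.mem_univ 1) one_pos h1
  simp [slope] at h3
  linarith

lemma descent {Φ : H → ℝ} {Φ' : H → H} {L : ℝ} (hL : 0 < L)
    (hΦ_diff : ∀ u, HasGradientAt Φ (Φ' u) u) (hΦ_lip : LipschitzWith (Real.toNNReal L) Φ')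
    (y u : H) : Φ u ≤ Φ y + ⟪Φ' y, u - y⟫ + L / 2 * ‖u - y‖ ^ 2 := by
  set d := u - y with hd
  have h1 := line_deriv hΦ_diff y d
  have h2 : ∀ τ : ℝ, HasDerivAt (fun τ : ℝ => Φ y + τ * ⟪Φ' y, d⟫ + L / 2 * ‖d‖ ^ 2 * τ ^ 2)
      (⟪Φ' y, d⟫ + L * ‖d‖ ^ 2 * τ) τ := by
    intro τ
    have := (((hasDerivAt_id τ).mul_const ⟪Φ' y, d⟫).const_add (Φ y)).add
      (((hasDerivAt_id τ).pow 2).const_mul (L / 2 * ‖d‖ ^ 2))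
    refine (this.congr_deriv ?_)
    simp; ring
  have h3 := image_le_of_deriv_right_le_deriv_boundary (a := 0) (b := 1)
    (fun τ _ => (h1 τ).continuousAt.continuousWithinAt)
    (fun τ _ => (h1 τ).hasDerivWithinAt)
    (by simp) (fun τ _ => (h2 τ).continuousAt.continuousWithinAt)
    (fun τ _ => (h2 τ).hasDerivWithinAt)
    (fun τ hτ => by
      have h4 : ⟪Φ' (y + τ • d), d⟫ = ⟪Φ' y, d⟫ + ⟪Φ' (y + τ • d) - Φ' y, d⟫ := by
        rw [inner_sub_left]; ring
      have h5 := real_inner_le_norm (Φ' (y + τ • d) - Φ' y) d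
      have h6 := hΦ_lip.norm_sub_le (y + τ • d) y
      rw [Real.coe_toNNReal _ hL.le, add_sub_cancel_left, norm_smul, Real.norm_of_nonneg hτ.1] at h6
      have h7 := mul_le_mul_of_nonneg_right h6 (norm_nonneg d)
      rw [h4]; nlinarith)
    (Set.right_mem_Icc.2 zero_le_one)
  simp [hd] at h3
  linarith

lemma lim_aux {a b c : ℝ} (h : ∀ τ : ℝ, 0 < τ → τ ≤ 1 → τ * a ≤ τ * b + τ ^ 2 * c) : a ≤ b := by
  by_contra hab
  push Not at hab
  set τ := min 1 ((a - b) / (2 * (|c| + 1))) with hτ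
  have hc := abs_nonneg c
  have h0 : 0 < τ := lt_min one_pos (div_pos (by linarith) (by linarith))
  have h1 := h τ h0 (min_le_left _ _)
  have h2 : τ * (2 * (|c| + 1)) ≤ a - b := by
    rw [← le_div_iff₀ (by linarith)]; exact min_le_right _ _
  have h3 : a ≤ b + τ * c := by
    refine le_of_mul_le_mul_left ?_ h0
    linarith
  have h4 : τ * c ≤ τ * |c| := mul_le_mul_of_nonneg_left (le_abs_self c) h0.le
  nlinarith

/-- prox inequality, real-valued form -/
lemma prox_ineq {Ψ : H → EReal} {s : ℝ} (hs : 0 < s) (hΨ_ne_bot : ∀ u, Ψ u ≠ ⊥)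
    (hΨ_convex : ∀ u v : H, ∀ a b : ℝ, 0 ≤ a → 0 ≤ b → a + b = 1 →
      Ψ (a • u + b • v) ≤ (a : EReal) * Ψ u + (b : EReal) * Ψ v)
    {p w : H} (hp : Ψ p ≠ ⊤)
    (hx : ∀ u : H, Ψ p + ((1 / (2 * s) * ‖p - w‖ ^ 2 : ℝ) : EReal)
        ≤ Ψ u + ((1 / (2 * s) * ‖u - w‖ ^ 2 : ℝ) : EReal)) (u : H) (hu : Ψ u ≠ ⊤) :
    (Ψ p).toReal + 1 / s * ⟪w - p, u - p⟫ ≤ (Ψ u).toReal := by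
  suffices (Ψ p).toReal - (Ψ u).toReal ≤ 1 / s * ⟪p - w, u - p⟫ by
    have h : ⟪w - p, u - p⟫ = -⟪p - w, u - p⟫ := by rw [← inner_neg_left, neg_sub]
    rw [h]; linarith
  refine lim_aux (c := 1 / (2 * s) * ‖u - p‖ ^ 2) fun τ h0 h1 => ?_
  have h2 := hx ((1 - τ) • p + τ • u)
  have h3 := hΨ_convex p u (1 - τ) τ (by linarith) h0.le (by ring)
  have h4 := h2.trans (add_le_add_left h3 _)
  lift Ψ p to ℝ using ⟨hp, hΨ_ne_bot p⟩ with P hP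
  lift Ψ u to ℝ using ⟨hu, hΨ_ne_bot u⟩ with Q hQ
  norm_cast at h4
  simp only [EReal.toReal_coe]
  have h5 : (1 - τ) • p + τ • u - w = (p - w) + τ • (u - p) := by module
  rw [h5, norm_add_sq_real, real_inner_smul_right, norm_smul, mul_pow, Real.norm_eq_abs, sq_abs] at h4
  have h6 : 1 / (2 * s) * (2 * (τ * ⟪p - w, u - p⟫)) = τ * (1 / s * ⟪p - w, u - p⟫) := by
    field_simp
  nlinarith


lemma fb_ineq {Ψ : H → EReal} {Φ : H → ℝ} {Φ' : H → H} {L s : ℝ} (hL : 0 < L) (hs : 0 < s)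
    (hsL : s * L ≤ 1) (hΨ_ne_bot : ∀ u, Ψ u ≠ ⊥)
    (hΨ_convex : ∀ u v : H, ∀ a b : ℝ, 0 ≤ a → 0 ≤ b → a + b = 1 →
      Ψ (a • u + b • v) ≤ (a : EReal) * Ψ u + (b : EReal) * Ψ v)
    (hΦ_convex : ConvexOn ℝ Set.univ Φ)
    (hΦ_diff : ∀ u, HasGradientAt Φ (Φ' u) u)
    (hΦ_lip : LipschitzWith (Real.toNNReal L) Φ')
    {p y : H} (hp : Ψ p ≠ ⊤)
    (hx : ∀ u : H, Ψ p + ((1 / (2 * s) * ‖p - (y - s • Φ' y)‖ ^ 2 : ℝ) : EReal)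
        ≤ Ψ u + ((1 / (2 * s) * ‖u - (y - s • Φ' y)‖ ^ 2 : ℝ) : EReal)) (u : H) (hu : Ψ u ≠ ⊤) :
    2 * s * (((Ψ p).toReal + Φ p) - ((Ψ u).toReal + Φ u)) ≤ ‖y - u‖ ^ 2 - ‖p - u‖ ^ 2 := by
  have h1 := prox_ineq hs hΨ_ne_bot hΨ_convex hp hx u hu
  have h2 := grad_ineq hΦ_convex hΦ_diff y u
  have h3 := descent hL hΦ_diff hΦ_lip y p
  have h4 : 1 / s * ⟪y - s • Φ' y - p, u - p⟫ = 1 / s * ⟪y - p, u - p⟫ - ⟪Φ' y, u - p⟫ := by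
    have : y - s • Φ' y - p = (y - p) - s • Φ' y := by abel
    rw [this, inner_sub_left, real_inner_smul_left]; field_simp
  have h5 : ⟪Φ' y, u - p⟫ = ⟪Φ' y, u - y⟫ - ⟪Φ' y, p - y⟫ := by
    rw [← inner_sub_right]; congr 1; abel
  have h6 : ‖y - u‖ ^ 2 = ‖p - y‖ ^ 2 - 2 * ⟪y - p, u - p⟫ + ‖p - u‖ ^ 2 := by
    have : y - u = (y - p) - (u - p) := by abel
    rw [this, norm_sub_sq_real, norm_sub_rev y p, norm_sub_rev u p]
  have h7 : ((Ψ p).toReal + Φ p) - ((Ψ u).toReal + Φ u)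
      ≤ - (1 / s * ⟪y - p, u - p⟫) + L / 2 * ‖p - y‖ ^ 2 := by linarith
  have h8 := mul_le_mul_of_nonneg_left h7 (show 0 ≤ 2 * s by positivity)
  have h9 : 2 * s * (- (1 / s * ⟪y - p, u - p⟫) + L / 2 * ‖p - y‖ ^ 2)
      = - 2 * ⟪y - p, u - p⟫ + (s * L) * ‖p - y‖ ^ 2 := by field_simp
  have h10 : (s * L) * ‖p - y‖ ^ 2 ≤ 1 * ‖p - y‖ ^ 2 := by gcongr
  linarith

end B

/-- Theorem 2: the sequence `(x_k)` converges weakly to a minimizer of `Ψ + Φ`. -/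
theorem fista_weak_convergence
    {H : Type*} [NormedAddCommGroup H] [InnerProductSpace ℝ H] [CompleteSpace H]
    (Ψ : H → EReal) (Φ : H → ℝ) (Φ' : H → H) (L s α : ℝ)
    (hΨ_ne_bot : ∀ u, Ψ u ≠ ⊥) (hΨ_proper : ∃ u, Ψ u ≠ ⊤)
    (hΨ_lsc : LowerSemicontinuous Ψ)
    (hΨ_convex : ∀ u v : H, ∀ a b : ℝ, 0 ≤ a → 0 ≤ b → a + b = 1 →
      Ψ (a • u + b • v) ≤ (a : EReal) * Ψ u + (b : EReal) * Ψ v)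
    (hΦ_convex : ConvexOn ℝ Set.univ Φ)
    (hΦ_diff : ∀ u, HasGradientAt Φ (Φ' u) u)
    (hΦ_lip : LipschitzWith (Real.toNNReal L) Φ')
    (hα : 3 < α) (hs : 0 < s) (hsL : s < 1 / L)
    (x y : ℕ → H)
    (hy : ∀ k : ℕ, 1 ≤ k →
      y k = x k + (((k : ℝ) - 1) / ((k : ℝ) + α - 1)) • (x k - x (k - 1)))
    (hx : ∀ k : ℕ, 1 ≤ k → ∀ u : H,
      Ψ (x (k + 1)) + ((1 / (2 * s) * ‖x (k + 1) - (y k - s • Φ' (y k))‖ ^ 2 : ℝ) : EReal)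
        ≤ Ψ u + ((1 / (2 * s) * ‖u - (y k - s • Φ' (y k))‖ ^ 2 : ℝ) : EReal))
    (xstar : H)
    (hxstar : ∀ u, Ψ xstar + (Φ xstar : EReal) ≤ Ψ u + (Φ u : EReal)) :
    ∃ p : H, (∀ u, Ψ p + (Φ p : EReal) ≤ Ψ u + (Φ u : EReal)) ∧
      ∀ v : H, Tendsto (fun k : ℕ => ⟪x k, v⟫) atTop (nhds ⟪p, v⟫) := by
  have hL : 0 < L := by
    have : 0 < 1 / L := hs.trans hsL
    exact one_div_pos.1 this
  have hsL' : s * L ≤ 1 := by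
    rw [lt_div_iff₀ hL] at hsL; exact hsL.le
  obtain ⟨u0, hu0⟩ := hΨ_proper
  have hS_fin : ∀ z, (∀ u, Ψ z + (Φ z : EReal) ≤ Ψ u + (Φ u : EReal)) → Ψ z ≠ ⊤ := by
    intro z hz h
    have h1 := hz u0
    lift Ψ u0 to ℝ using ⟨hu0, hΨ_ne_bot u0⟩ with P hP
    rw [h, EReal.top_add_coe, top_le_iff] at h1
    exact (EReal.coe_ne_top _) h1
  have hxfin : ∀ k, 1 ≤ k → Ψ (x (k + 1)) ≠ ⊤ := by
    intro k hk h
    have h1 := hx k hk u0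
    lift Ψ u0 to ℝ using ⟨hu0, hΨ_ne_bot u0⟩ with P hP
    rw [h, EReal.top_add_coe, top_le_iff] at h1
    exact (EReal.coe_ne_top _) h1
  set Th : H → ℝ := fun u => (Ψ u).toReal + Φ u with hTh
  have hcoe : ∀ u, Ψ u ≠ ⊤ → Ψ u + (Φ u : EReal) = (Th u : EReal) := by
    intro u hu
    rw [hTh]
    push_cast
    rw [EReal.coe_toReal hu (hΨ_ne_bot u)]
  have hSle : ∀ z, (∀ u, Ψ z + (Φ z : EReal) ≤ Ψ u + (Φ u : EReal)) → ∀ u, Ψ u ≠ ⊤ →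
      Th z ≤ Th u := by
    intro z hz u hu
    have h1 := hz u
    rw [hcoe u hu, hcoe z (hS_fin z hz)] at h1
    exact_mod_cast h1
  have hmain : ∀ k, 1 ≤ k → ∀ u, Ψ u ≠ ⊤ →
      2 * s * (Th (x (k + 1)) - Th u) ≤ ‖y k - u‖ ^ 2 - ‖x (k + 1) - u‖ ^ 2 :=
    fun k hk u hu => fb_ineq hL hs hsL' hΨ_ne_bot hΨ_convex hΦ_convex hΦ_diff hΦ_lip
      (hxfin k hk) (hx k hk) u hu
  have hr : 2 < α - 1 := by linarith
  have hcore := fun z hz => core (X := fun n => x (n + 1)) (Y := fun n => y (n + 2))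
    (θ := fun n => Th (x (n + 2)) - Th xstar) (t := fun n => ((n : ℝ) + α) / (α - 1)) hs hr
    (by rw [Nat.cast_zero, zero_add, le_div_iff₀ (by linarith)]; linarith)
    (fun n => by push_cast; ring)
    (fun n => sub_nonneg.2 (hSle xstar hxstar _ (hxfin (n + 1) (by omega))))
    (fun n => by
      have h1 := hy (n + 2) (by omega)
      simp only [show n + 2 - 1 = n + 1 from rfl] at h1
      simp only [show n + 1 + 1 = n + 2 from rfl]
      rw [h1, add_sub_cancel_left, smul_smul]
      congr 1
      push_cast
      have h2 : (α - 1) ≠ 0 := by linarith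
      have h3 : ((n : ℝ) + 2 + α - 1) ≠ 0 := by
        have : (0 : ℝ) ≤ n := Nat.cast_nonneg n
        linarith
      field_simp
      ring)
    (fun n => by
      have h1 := hmain (n + 2) (by omega) (x (n + 2)) (hxfin (n + 1) (by omega))
      refine le_trans (le_of_eq ?_) h1
      simp only [show n + 1 + 2 = n + 2 + 1 from rfl]
      ring)
    z
    (fun n => by
      have h1 := hmain (n + 2) (by omega) z (hS_fin z hz)
      have h2 := hSle xstar hxstar z (hS_fin z hz)
      have h3 := hSle z hz xstar (hS_fin xstar hxstar)
      rw [le_antisymm h2 h3]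
      exact h1)
  have hθ := (hcore xstar hxstar).1
  have hθ' : Tendsto (fun n => Th (x n)) atTop (nhds (Th xstar)) := by
    rw [← tendsto_add_atTop_iff_nat 2]
    simpa using hθ.add_const (Th xstar)
  have hfin' : ∀ᶠ n in atTop, Ψ (x n) ≠ ⊤ := by
    filter_upwards [eventually_ge_atTop 2] with n hn
    obtain ⟨m, rfl⟩ := Nat.exists_eq_add_of_le hn
    have := hxfin (m + 1) (by omega)
    rwa [show m + 1 + 1 = 2 + m by omega] at this
  have hΦc : Continuous Φ := continuous_iff_continuousAt.2 fun u => (hΦ_diff u).continuousAt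
  refine opial (S := {p | ∀ u, Ψ p + (Φ p : EReal) ≤ Ψ u + (Φ u : EReal)}) xstar hxstar ?_ ?_
  · intro z hz
    obtain ⟨l, hl⟩ := (hcore z hz).2
    exact ⟨l, (tendsto_add_atTop_iff_nat (f := fun n => ‖x n - z‖) 1).1 hl⟩
  · intro U p hU hp
    have hlev : ∀ ε > 0, Ψ p + (Φ p : EReal) ≤ ((Th xstar + ε : ℝ) : EReal) := by
      intro ε hε
      set C : Set H := {u | Ψ u + (Φ u : EReal) ≤ ((Th xstar + ε : ℝ) : EReal)} with hC
      have hCfin : ∀ u ∈ C, Ψ u ≠ ⊤ := by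
        intro u hu h
        have h1 : Ψ u + (Φ u : EReal) ≤ ((Th xstar + ε : ℝ) : EReal) := hu
        rw [h, EReal.top_add_coe, top_le_iff] at h1
        exact (EReal.coe_ne_top _) h1
      have hconv : Convex ℝ C := by
        intro u hu v hv a b ha hb hab
        have hu' : Ψ u + (Φ u : EReal) ≤ ((Th xstar + ε : ℝ) : EReal) := hu
        have hv' : Ψ v + (Φ v : EReal) ≤ ((Th xstar + ε : ℝ) : EReal) := hv
        have h1 := hΨ_convex u v a b ha hb hab
        have h2 := hΦ_convex.2 (Set.mem_univ u) (Set.mem_univ v) ha hb hab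
        have hfu := hCfin u hu
        have hfv := hCfin v hv
        show Ψ (a • u + b • v) + (Φ (a • u + b • v) : EReal) ≤ ((Th xstar + ε : ℝ) : EReal)
        generalize Th xstar + ε = c at *
        lift Ψ u to ℝ using ⟨hfu, hΨ_ne_bot u⟩ with P hP
        lift Ψ v to ℝ using ⟨hfv, hΨ_ne_bot v⟩ with Q hQ
        refine (add_le_add_left h1 _).trans ?_
        norm_cast at hu' hv' ⊢
        simp only [smul_eq_mul] at h2
        have h3 := mul_le_mul_of_nonneg_left hu' ha
        have h4 := mul_le_mul_of_nonneg_left hv' hb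
        have h5 : a * c + b * c = c := by rw [← add_mul, hab, one_mul]
        linarith
      have hclosed : IsClosed C := by
        have h1 : LowerSemicontinuous fun u => Ψ u + (Φ u : EReal) := by
          refine hΨ_lsc.add' (continuous_coe_real_ereal.comp hΦc).lowerSemicontinuous fun u => ?_
          exact EReal.continuousAt_add (Or.inr (EReal.coe_ne_bot _)) (Or.inr (EReal.coe_ne_top _))
        exact h1.isClosed_preimage _
      refine weak_mem hconv hclosed (hU ?_) hp
      filter_upwards [hfin', hθ'.eventually_lt_const (show Th xstar < Th xstar + ε by linarith)]
        with n h1 h2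
      show Ψ (x n) + (Φ (x n) : EReal) ≤ ((Th xstar + ε : ℝ) : EReal)
      rw [hcoe _ h1]
      exact_mod_cast h2.le
    have hpfin : Ψ p ≠ ⊤ := by
      intro h
      have h1 := hlev 1 one_pos
      rw [h, EReal.top_add_coe, top_le_iff] at h1
      exact (EReal.coe_ne_top _) h1
    have hple : Th p ≤ Th xstar := by
      refine le_of_forall_pos_le_add fun ε hε => ?_
      have h1 := hlev ε hε
      rw [hcoe p hpfin] at h1
      exact_mod_cast h1
    intro u
    refine le_trans ?_ (hxstar u)
    rw [hcoe p hpfin, hcoe xstar (hS_fin xstar hxstar)]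
    exact_mod_cast hple
end

section
/- Let H be a real Hilbert space, Ψ : H → ℝ ∪ {+∞} proper, lower-semicontinuous and convex, and Φ : H → ℝ convex and continuously differentiable with L-Lipschitz continuous gradient. Suppose x* ∈ argmin(Ψ + Φ), and let (x_k) be generated by the accelerated forward-backward algorithm with parameter α > 3 and step size 0 < s < 1/L. Then for every k ≥ 1, ‖x_{k+1} − x*‖² ≤ ‖x_k − x*‖² + 2‖x_k − x_{k−1}‖² + ((k−1)/(k+α−1)) ( ‖x_k − x*‖² − ‖x_{k−1} − x*‖² ). -/
open Filter RealInnerProductSpace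

lemma fista_line_deriv {H : Type*} [NormedAddCommGroup H] [InnerProductSpace ℝ H] [CompleteSpace H]
    (Φ : H → ℝ) (Φ' : H → H) (hΦ_diff : ∀ u, HasGradientAt Φ (Φ' u) u) (y d : H) (t : ℝ) :
    HasDerivAt (fun t : ℝ => Φ (y + t • d)) (inner ℝ (Φ' (y + t • d)) d) t := by
  have h1 : HasDerivAt (fun t : ℝ => y + t • d) d t := by
    simpa using ((hasDerivAt_id t).smul_const d).const_add y
  have h2 := (hΦ_diff (y + t • d)).hasFDerivAt.comp_hasDerivAt t h1
  rw [InnerProductSpace.toDual_apply_apply] at h2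
  exact h2

lemma fista_descent {H : Type*} [NormedAddCommGroup H] [InnerProductSpace ℝ H] [CompleteSpace H]
    (Φ : H → ℝ) (Φ' : H → H) (L : ℝ) (hL : 0 < L) (hΦ_diff : ∀ u, HasGradientAt Φ (Φ' u) u)
    (hΦ_lip : LipschitzWith (Real.toNNReal L) Φ') (y d : H) :
    Φ (y + d) ≤ Φ y + inner ℝ (Φ' y) d + L / 2 * ‖d‖ ^ 2 := by
  have hd : ∀ t : ℝ, HasDerivAt
      (fun t : ℝ => Φ (y + t • d) - t * inner ℝ (Φ' y) d - t ^ 2 * (L / 2 * ‖d‖ ^ 2))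
      (inner ℝ (Φ' (y + t • d)) d - inner ℝ (Φ' y) d - 2 * t * (L / 2 * ‖d‖ ^ 2)) t := by
    intro t
    have h1 := fista_line_deriv Φ Φ' hΦ_diff y d t
    have h2 := (hasDerivAt_id t).mul_const (inner ℝ (Φ' y) d)
    have h3 := (hasDerivAt_pow 2 t).mul_const (L / 2 * ‖d‖ ^ 2)
    have h4 := (h1.sub h2).sub h3
    exact h4.congr_deriv (by simp)
  have ha := antitoneOn_of_deriv_nonpos (convex_Icc (0 : ℝ) 1)
    (fun t _ => (hd t).continuousAt.continuousWithinAt)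
    (fun t _ => (hd t).differentiableAt.differentiableWithinAt)
    (by
      intro t ht
      rw [interior_Icc] at ht
      rw [(hd t).deriv]
      have h1 : inner ℝ (Φ' (y + t • d) - Φ' y) d ≤ ‖Φ' (y + t • d) - Φ' y‖ * ‖d‖ :=
        real_inner_le_norm _ _
      have h2 : ‖Φ' (y + t • d) - Φ' y‖ ≤ L * (t * ‖d‖) := by
        have := hΦ_lip.norm_sub_le (y + t • d) y
        rw [Real.coe_toNNReal L hL.le, add_sub_cancel_left, norm_smul, Real.norm_eq_abs,
          abs_of_pos ht.1] at this
        exact this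
      rw [inner_sub_left] at h1
      have := mul_le_mul_of_nonneg_right h2 (norm_nonneg d)
      nlinarith)
  have := ha (Set.left_mem_Icc.2 zero_le_one) (Set.right_mem_Icc.2 zero_le_one) zero_le_one
  simp at this
  linarith

lemma fista_grad_ineq {H : Type*} [NormedAddCommGroup H] [InnerProductSpace ℝ H] [CompleteSpace H]
    (Φ : H → ℝ) (Φ' : H → H) (hΦ_convex : ConvexOn ℝ Set.univ Φ)
    (hΦ_diff : ∀ u, HasGradientAt Φ (Φ' u) u) (y d : H) :
    Φ y + inner ℝ (Φ' y) d ≤ Φ (y + d) := by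
  have hc : ConvexOn ℝ Set.univ (fun t : ℝ => Φ (y + t • d)) := by
    refine ⟨convex_univ, fun a _ b _ p q hp hq hpq => ?_⟩
    have := hΦ_convex.2 (Set.mem_univ (y + a • d)) (Set.mem_univ (y + b • d)) hp hq hpq
    have e : p • (y + a • d) + q • (y + b • d) = y + (p • a + q • b) • d := by
      have : q = 1 - p := by linarith
      subst this
      simp only [smul_eq_mul]
      module
    rwa [e] at this
  have h1 := fista_line_deriv Φ Φ' hΦ_diff y d 0
  have := hc.le_slope_of_hasDerivAt (Set.mem_univ 0) (Set.mem_univ 1) zero_lt_one h1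
  simp [slope_def_field] at this
  linarith

/-- If `t * A ≤ t * B + t ^ 2 * C` for small `t`, then `A ≤ B`. -/
lemma fista_limit (A B C : ℝ) (hC : 0 ≤ C)
    (h : ∀ t : ℝ, 0 < t → t ≤ 1 → t * A ≤ t * B + t ^ 2 * C) : A ≤ B := by
  by_contra hlt
  push Not at hlt
  have hp : 0 < A - B + C := by linarith
  have ht : 0 < (A - B) / (2 * (A - B + C)) := div_pos (by linarith) (by linarith)
  have ht1 : (A - B) / (2 * (A - B + C)) ≤ 1 := by
    rw [div_le_one (by linarith)]; linarith
  have h1 := h _ ht ht1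
  set t := (A - B) / (2 * (A - B + C)) with htd
  have h2 : t * (2 * (A - B + C)) = A - B := by rw [htd]; field_simp
  have h3 : A ≤ B + t * C := by
    have : t * A ≤ t * (B + t * C) := by linarith
    exact le_of_mul_le_mul_left this ht
  nlinarith [mul_pos ht (sub_pos.2 hlt)]

/-- `‖x_{k+1}-x*‖² ≤ ‖x_k-x*‖² + 2‖x_k-x_{k-1}‖² + ((k-1)/(k+α-1))(‖x_k-x*‖²-‖x_{k-1}-x*‖²)`. -/
theorem fista_anchor_inequality
    {H : Type*} [NormedAddCommGroup H] [InnerProductSpace ℝ H] [CompleteSpace H]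
    (Ψ : H → EReal) (Φ : H → ℝ) (Φ' : H → H) (L s α : ℝ)
    (hΨ_ne_bot : ∀ u, Ψ u ≠ ⊥) (hΨ_proper : ∃ u, Ψ u ≠ ⊤)
    (hΨ_lsc : LowerSemicontinuous Ψ)
    (hΨ_convex : ∀ u v : H, ∀ a b : ℝ, 0 ≤ a → 0 ≤ b → a + b = 1 →
      Ψ (a • u + b • v) ≤ (a : EReal) * Ψ u + (b : EReal) * Ψ v)
    (hΦ_convex : ConvexOn ℝ Set.univ Φ)
    (hΦ_diff : ∀ u, HasGradientAt Φ (Φ' u) u)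
    (hΦ_lip : LipschitzWith (Real.toNNReal L) Φ')
    (hα : 3 < α) (hs : 0 < s) (hsL : s < 1 / L)
    (x y : ℕ → H)
    (hy : ∀ k : ℕ, 1 ≤ k →
      y k = x k + (((k : ℝ) - 1) / ((k : ℝ) + α - 1)) • (x k - x (k - 1)))
    (hx : ∀ k : ℕ, 1 ≤ k → ∀ u : H,
      Ψ (x (k + 1)) + ((1 / (2 * s) * ‖x (k + 1) - (y k - s • Φ' (y k))‖ ^ 2 : ℝ) : EReal)
        ≤ Ψ u + ((1 / (2 * s) * ‖u - (y k - s • Φ' (y k))‖ ^ 2 : ℝ) : EReal))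
    (xstar : H)
    (hxstar : ∀ u, Ψ xstar + (Φ xstar : EReal) ≤ Ψ u + (Φ u : EReal)) :
    ∀ k : ℕ, 1 ≤ k →
      ‖x (k + 1) - xstar‖ ^ 2 ≤ ‖x k - xstar‖ ^ 2 + 2 * ‖x k - x (k - 1)‖ ^ 2 +
        (((k : ℝ) - 1) / ((k : ℝ) + α - 1)) * (‖x k - xstar‖ ^ 2 - ‖x (k - 1) - xstar‖ ^ 2) := by
  have hL : 0 < L := by
    by_contra hL
    have : 1 / L ≤ 0 := one_div_nonpos.2 (not_lt.1 hL)
    linarith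
  intro k hk
  obtain ⟨u0, hu0⟩ := hΨ_proper
  have hst : Ψ xstar ≠ ⊤ := by
    intro h
    have := hxstar u0
    rw [h, EReal.top_add_coe, top_le_iff] at this
    exact EReal.add_ne_top hu0 (EReal.coe_ne_top _) this
  have hpt : Ψ (x (k + 1)) ≠ ⊤ := by
    intro h
    have := hx k hk xstar
    rw [h, EReal.top_add_coe, top_le_iff] at this
    exact EReal.add_ne_top hst (EReal.coe_ne_top _) this
  have hyk := hy k hk
  have hxk := hx k hk
  generalize x (k + 1) = p at *
  generalize y k = w at *
  obtain ⟨a, ha⟩ : ∃ a : ℝ, Ψ xstar = a := ⟨_, (EReal.coe_toReal hst (hΨ_ne_bot _)).symm⟩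
  obtain ⟨b, hb⟩ : ∃ b : ℝ, Ψ p = b := ⟨_, (EReal.coe_toReal hpt (hΨ_ne_bot _)).symm⟩
  have hmin : a + Φ xstar ≤ b + Φ p := by
    have := hxstar p
    rw [ha, hb] at this
    exact_mod_cast this
  have hprox : b - a ≤ 1 / s * inner ℝ (p - (w - s • Φ' w)) (xstar - p) := by
    refine fista_limit _ _ (1 / (2 * s) * ‖xstar - p‖ ^ 2) (by positivity) fun t ht ht1 => ?_
    have h1 := hxk ((1 - t) • p + t • xstar)
    have h2 := hΨ_convex p xstar (1 - t) t (by linarith) ht.le (by ring)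
    have h3 := h1.trans (add_le_add_left h2 _)
    rw [ha, hb] at h3
    have h4 : b + 1 / (2 * s) * ‖p - (w - s • Φ' w)‖ ^ 2 ≤ (1 - t) * b + t * a +
        1 / (2 * s) * ‖(1 - t) • p + t • xstar - (w - s • Φ' w)‖ ^ 2 := by
      exact_mod_cast h3
    have e : (1 - t) • p + t • xstar - (w - s • Φ' w)
        = (p - (w - s • Φ' w)) + t • (xstar - p) := by module
    rw [e, norm_add_sq_real, inner_smul_right, norm_smul, Real.norm_eq_abs, mul_pow, sq_abs] at h4
    have e2 : 1 / s = 2 * (1 / (2 * s)) := by field_simp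
    rw [e2]
    linarith
  have hdes := fista_descent Φ Φ' L hL hΦ_diff hΦ_lip w (p - w)
  have hgr := fista_grad_ineq Φ Φ' hΦ_convex hΦ_diff w (xstar - w)
  rw [add_sub_cancel] at hdes hgr
  have e1 : (1 / s) * inner ℝ (p - (w - s • Φ' w)) (xstar - p)
      = (1 / s) * inner ℝ (p - w) (xstar - p) + inner ℝ (Φ' w) (xstar - p) := by
    have : p - (w - s • Φ' w) = (p - w) + s • Φ' w := by module
    rw [this, inner_add_left, real_inner_smul_left]
    field_simp
  have e2 : inner ℝ (Φ' w) (xstar - w) = inner ℝ (Φ' w) (xstar - p) + inner ℝ (Φ' w) (p - w) := by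
    rw [← inner_add_right]; congr 1; abel
  have hkey : 0 ≤ 1 / s * inner ℝ (p - w) (xstar - p) + L / 2 * ‖p - w‖ ^ 2 := by linarith
  have hsL' : s * L ≤ 1 := by
    rw [lt_div_iff₀ hL] at hsL; exact hsL.le
  have hkey2 : 0 ≤ 2 * inner ℝ (p - w) (xstar - p) + ‖p - w‖ ^ 2 := by
    have h := mul_nonneg hs.le hkey
    have e3 : s * (1 / s * inner ℝ (p - w) (xstar - p) + L / 2 * ‖p - w‖ ^ 2)
      = inner ℝ (p - w) (xstar - p) + s * L / 2 * ‖p - w‖ ^ 2 := by field_simp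
    rw [e3] at h
    nlinarith [mul_le_mul_of_nonneg_right hsL' (sq_nonneg ‖p - w‖)]
  have hfin : ‖p - xstar‖ ^ 2 ≤ ‖w - xstar‖ ^ 2 := by
    have e4 : xstar - w = (p - w) + (xstar - p) := by abel
    rw [norm_sub_rev p, norm_sub_rev w, e4, norm_add_sq_real]
    linarith
  have hk1 : (1 : ℝ) ≤ k := by exact_mod_cast hk
  have hγ0 : 0 ≤ ((k : ℝ) - 1) / ((k : ℝ) + α - 1) := div_nonneg (by linarith) (by linarith)
  have hγ1 : ((k : ℝ) - 1) / ((k : ℝ) + α - 1) ≤ 1 := by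
    rw [div_le_one (by linarith)]; linarith
  generalize ((k : ℝ) - 1) / ((k : ℝ) + α - 1) = γ at *
  refine hfin.trans ?_
  have e5 : w - xstar = (x k - xstar) + γ • (x k - x (k - 1)) := by rw [hyk]; module
  have e6 : x (k - 1) - xstar = (x k - xstar) - (x k - x (k - 1)) := by abel
  rw [e5, e6, norm_add_sq_real, norm_sub_sq_real (x k - xstar), inner_smul_right, norm_smul, Real.norm_eq_abs,
    mul_pow, sq_abs]
  have : (γ ^ 2 + γ) * ‖x k - x (k - 1)‖ ^ 2 ≤ 2 * ‖x k - x (k - 1)‖ ^ 2 :=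
    mul_le_mul_of_nonneg_right (by nlinarith) (sq_nonneg _)
  linarith
end

section
/- Let H be a real Hilbert space, Ψ : H → ℝ ∪ {+∞} proper, lower-semicontinuous and convex, and Φ : H → ℝ convex and continuously differentiable with L-Lipschitz continuous gradient. Suppose x* ∈ argmin(Ψ + Φ), and let (x_k) be generated by the accelerated forward-backward algorithm with parameter α > 3 and step size 0 < s < 1/L. Then for every x* ∈ argmin(Ψ + Φ), the limit lim_{k→∞} ‖x_k − x*‖ exists. -/
open Filter RealInnerProductSpace

namespace FistaAux

lemma summable_aux (a b c : ℕ → ℝ) (ha : ∀ n, 0 ≤ a n) (hb : ∀ n, 0 ≤ b n)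
    (hc0 : ∀ n, 0 ≤ c n) (hc : Summable c)
    (h : ∀ n, a (n + 1) + b n ≤ a n + c n) : Summable b := by
  have key : ∀ n, a n + ∑ i ∈ Finset.range n, b i ≤ a 0 + ∑ i ∈ Finset.range n, c i := by
    intro n
    induction n with
    | zero => simp
    | succ n ih =>
      rw [Finset.sum_range_succ, Finset.sum_range_succ]
      linarith [h n]
  refine summable_of_sum_range_le (c := a 0 + ∑' i, c i) hb ?_
  intro n
  have h1 := hc.sum_le_tsum (Finset.range n) (fun i _ => hc0 i)
  linarith [key n, ha n]

lemma tendsto_aux (a c : ℕ → ℝ) (ha : ∀ n, 0 ≤ a n)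
    (hc0 : ∀ n, 0 ≤ c n) (hc : Summable c)
    (h : ∀ n, a (n + 1) ≤ a n + c n) : ∃ l, Tendsto a atTop (nhds l) := by
  have hanti : Antitone (fun n => a n - ∑ i ∈ Finset.range n, c i) := by
    refine antitone_nat_of_succ_le ?_
    intro n
    rw [Finset.sum_range_succ]
    linarith [h n]
  have hbdd : BddBelow (Set.range (fun n => a n - ∑ i ∈ Finset.range n, c i)) := by
    refine ⟨- ∑' i, c i, ?_⟩
    rintro _ ⟨n, rfl⟩
    have h1 := hc.sum_le_tsum (Finset.range n) (fun i _ => hc0 i)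
    have := ha n
    simp only
    linarith
  have h1 := tendsto_atTop_ciInf hanti hbdd
  have h2 := h1.add hc.hasSum.tendsto_sum_nat
  refine ⟨_, h2.congr ?_⟩
  intro n
  simp

/-- The real-variable core. -/
lemma scalar_core (m : ℝ) (hm : 2 < m) (A B P T : ℕ → ℝ)
    (hA : ∀ n, 0 ≤ A n) (hB : ∀ n, 0 ≤ B n) (hT : ∀ n, 0 ≤ T n)
    (hV : ∀ n, 0 ≤ m ^ 2 * A n + 2 * m * ((n : ℝ) + 1) * P n + ((n : ℝ) + 1) ^ 2 * B n)
    (hrec : ∀ n, A (n + 1) = A n + 2 * P (n + 1) - B (n + 1))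
    (g : ℕ → ℝ) (hg : ∀ n : ℕ, g n * ((n : ℝ) + 2 + m) = n + 1)
    (h1 : ∀ n, T (n + 1) ≤ T n + g n ^ 2 * B n - B (n + 1))
    (h2 : ∀ n, T (n + 1) ≤ A n + 2 * g n * P n + g n ^ 2 * B n - A (n + 1)) :
    ∃ l, Tendsto A atTop (nhds l) := by
  have hg0 : ∀ n, 0 ≤ g n := by
    intro n
    by_contra hc
    push Not at hc
    have h3 : 0 < (n : ℝ) + 2 + m := by positivity
    have h4 : (0:ℝ) ≤ n := by positivity
    nlinarith [hg n]
  have hg1 : ∀ n, g n ≤ 1 := by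
    intro n
    by_contra hc
    push Not at hc
    have h3 : 0 < (n : ℝ) + 2 + m := by positivity
    nlinarith [hg n]
  -- step 1
  have s1 : Summable (fun n : ℕ => (m - 2) * ((n : ℝ) + 2 + m) * T n) := by
    refine summable_aux (fun n : ℕ => ((n : ℝ) + 1 + m) ^ 2 * T n +
      (m ^ 2 * A n + 2 * m * ((n : ℝ) + 1) * P n + ((n : ℝ) + 1) ^ 2 * B n)) _ (fun _ => 0)
      ?_ ?_ (fun _ => le_rfl) summable_zero ?_
    · intro n
      have := hV n
      have := mul_nonneg (sq_nonneg ((n : ℝ) + 1 + m)) (hT n)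
      linarith
    · intro n
      have : 0 < m - 2 := by linarith
      have := hT n
      positivity
    · intro n
      have hn : (0:ℝ) ≤ n := by positivity
      have e1 := mul_le_mul_of_nonneg_left (h1 n)
        (show 0 ≤ ((n : ℝ) + 2 + m) * (n + 2) by positivity)
      have e2 := mul_le_mul_of_nonneg_left (h2 n)
        (show 0 ≤ ((n : ℝ) + 2 + m) * m by positivity)
      have hr := hrec n
      have hgn := hg n
      have hTn := hT n
      push_cast
      have q1 : (((n : ℝ) + 2 + m) * (n + 2)) * (g n ^ 2 * B n)
          + (((n : ℝ) + 2 + m) * m) * (g n ^ 2 * B n) = ((n : ℝ) + 1) ^ 2 * B n := by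
        rw [← hgn]; ring
      have q2 : (((n : ℝ) + 2 + m) * m) * (2 * g n * P n) = 2 * m * ((n : ℝ) + 1) * P n := by
        rw [← hgn]; ring
      have hP : P (n + 1) = (A (n + 1) - A n + B (n + 1)) / 2 := by linarith
      rw [hP]
      nlinarith
  have s1' : Summable (fun n : ℕ => ((n : ℝ) + 2 + m) * T n) := by
    have hne : m - 2 ≠ 0 := by linarith
    have := s1.mul_left (m - 2)⁻¹
    refine this.congr ?_
    intro n
    field_simp
  -- step 2
  have s2 : Summable (fun n : ℕ => ((n : ℝ) + 1 + m) * B n) := by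
    have hs := ((summable_nat_add_iff 1).2 s1').mul_left 2
    refine summable_aux (fun n : ℕ => ((n : ℝ) + 1 + m) ^ 2 * B n +
      ((n : ℝ) + 2 + m) ^ 2 * T n) _ _ ?_ ?_ ?_ hs ?_
    · intro n
      have := hB n
      have := hT n
      positivity
    · intro n
      have := hB n
      positivity
    · intro n
      have := hT (n + 1)
      positivity
    · intro n
      have hn : (0:ℝ) ≤ n := by positivity
      have e1 := mul_le_mul_of_nonneg_left (h1 n)
        (show 0 ≤ ((n : ℝ) + 2 + m) ^ 2 by positivity)
      have q1 : ((n : ℝ) + 2 + m) ^ 2 * (g n ^ 2 * B n) = ((n : ℝ) + 1) ^ 2 * B n := by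
        rw [← hg n]; ring
      have q2 : ((n : ℝ) + 1) ^ 2 * B n + ((n : ℝ) + 1 + m) * B n
          ≤ ((n : ℝ) + 1 + m) ^ 2 * B n := by
        rw [← add_mul]
        refine mul_le_mul_of_nonneg_right ?_ (hB n)
        nlinarith
      have hTn := hT (n + 1)
      push_cast
      nlinarith
  -- step 3
  set p : ℕ → ℝ := fun n => max (A (n + 1) - A n) 0 with hp
  have hp0 : ∀ n, 0 ≤ p n := fun n => le_max_right _ _
  have s3 : Summable (fun n => m * p n) := by
    have hs := ((summable_nat_add_iff 1).2 s2).mul_left 4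
    refine summable_aux (fun n : ℕ => ((n : ℝ) + 2 + m) * p n) _ _ ?_ ?_ ?_ hs ?_
    · intro n
      have := hp0 n
      positivity
    · intro n
      have := hp0 n
      positivity
    · intro n
      have := hB (n + 1)
      positivity
    · intro n
      have hn : (0:ℝ) ≤ n := by positivity
      have hb := hB (n + 1)
      have hgn := hg (n + 1)
      push_cast at hgn ⊢
      have hk : p (n + 1) ≤ g (n + 1) * p n + 2 * B (n + 1) := by
        refine max_le ?_ ?_
        · have h3 := h2 (n + 1)
          have h4 := hT (n + 1 + 1)
          have h5 : 2 * P (n + 1) = A (n + 1) - A n + B (n + 1) := by linarith [hrec n]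
          have h6 : g (n + 1) * (A (n + 1) - A n) ≤ g (n + 1) * p n :=
            mul_le_mul_of_nonneg_left (le_max_left _ _) (hg0 _)
          have h7 : 2 * g (n + 1) * P (n + 1)
              = g (n + 1) * (A (n + 1) - A n) + g (n + 1) * B (n + 1) := by
            rw [← mul_add, ← h5]; ring
          have h8 : g (n + 1) * B (n + 1) ≤ 1 * B (n + 1) :=
            mul_le_mul_of_nonneg_right (hg1 _) hb
          have h9 : g (n + 1) ^ 2 * B (n + 1) ≤ 1 * B (n + 1) :=
            mul_le_mul_of_nonneg_right (pow_le_one₀ (hg0 _) (hg1 _)) hb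
          linarith
        · have := hg0 (n + 1)
          have := hp0 n
          positivity
      have e1 := mul_le_mul_of_nonneg_left hk
        (show 0 ≤ (n : ℝ) + 1 + 2 + m by positivity)
      have q1 : ((n : ℝ) + 1 + 2 + m) * (g (n + 1) * p n) = ((n : ℝ) + 1 + 1) * p n := by
        rw [← hgn]; ring
      nlinarith
  have s3' : Summable p := by
    have hne : m ≠ 0 := by linarith
    refine (s3.mul_left m⁻¹).congr ?_
    intro n
    field_simp
  refine tendsto_aux A p hA hp0 s3' ?_
  intro n
  have : A (n + 1) - A n ≤ p n := le_max_left _ _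
  linarith

variable {H : Type*} [NormedAddCommGroup H] [InnerProductSpace ℝ H]

lemma hasDerivAt_line [CompleteSpace H] (Φ : H → ℝ) (Φ' : H → H)
    (hΦ_diff : ∀ u, HasGradientAt Φ (Φ' u) u) (u w : H) (t : ℝ) :
    HasDerivAt (fun t : ℝ => Φ (u + t • w)) ⟪Φ' (u + t • w), w⟫ t := by
  have h1 := (hΦ_diff (u + t • w)).hasFDerivAt
  have h2 : HasDerivAt (fun t : ℝ => u + t • w) w t := by
    simpa using ((hasDerivAt_id t).smul_const w).const_add u
  have := h1.comp_hasDerivAt t h2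
  simpa [Function.comp_def] using this

lemma descent [CompleteSpace H] (Φ : H → ℝ) (Φ' : H → H) (L : ℝ) (hL : 0 < L)
    (hΦ_diff : ∀ u, HasGradientAt Φ (Φ' u) u)
    (hΦ_lip : LipschitzWith (Real.toNNReal L) Φ') (u v : H) :
    Φ v ≤ Φ u + ⟪Φ' u, v - u⟫ + L / 2 * ‖v - u‖ ^ 2 := by
  set w := v - u with hw
  have hd : ∀ t : ℝ, HasDerivAt
      (fun t : ℝ => Φ (u + t • w) - t * ⟪Φ' u, w⟫ - t ^ 2 * (L / 2 * ‖w‖ ^ 2))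
      (⟪Φ' (u + t • w), w⟫ - 1 * ⟪Φ' u, w⟫ - (2 * t) * (L / 2 * ‖w‖ ^ 2)) t := by
    intro t
    refine ((hasDerivAt_line Φ Φ' hΦ_diff u w t).sub
      ((hasDerivAt_id t).mul_const _)).sub ?_
    have := (hasDerivAt_pow 2 t).mul_const (L / 2 * ‖w‖ ^ 2)
    simpa using this
  have hanti : AntitoneOn
      (fun t : ℝ => Φ (u + t • w) - t * ⟪Φ' u, w⟫ - t ^ 2 * (L / 2 * ‖w‖ ^ 2))
      (Set.Icc 0 1) := by
    refine antitoneOn_of_deriv_nonpos (convex_Icc 0 1)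
      (fun t _ => (hd t).continuousAt.continuousWithinAt)
      (fun t _ => (hd t).differentiableAt.differentiableWithinAt) ?_
    intro t ht
    rw [interior_Icc] at ht
    rw [(hd t).deriv]
    have h1 : ⟪Φ' (u + t • w), w⟫ - ⟪Φ' u, w⟫ = ⟪Φ' (u + t • w) - Φ' u, w⟫ := by
      rw [inner_sub_left]
    have h2 := real_inner_le_norm (Φ' (u + t • w) - Φ' u) w
    have h3 := hΦ_lip.norm_sub_le (u + t • w) u
    rw [Real.coe_toNNReal _ hL.le, add_sub_cancel_left, norm_smul, Real.norm_eq_abs,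
      abs_of_pos ht.1] at h3
    have h4 := mul_le_mul_of_nonneg_right h3 (norm_nonneg w)
    nlinarith
  have := hanti (Set.left_mem_Icc.2 zero_le_one) (Set.right_mem_Icc.2 zero_le_one) zero_le_one
  simp only [one_smul, zero_smul, add_zero] at this
  have hv : u + w = v := by rw [hw]; abel
  rw [hv] at this
  linarith

lemma convex_lower [CompleteSpace H] (Φ : H → ℝ) (Φ' : H → H)
    (hΦ_convex : ConvexOn ℝ Set.univ Φ)
    (hΦ_diff : ∀ u, HasGradientAt Φ (Φ' u) u) (u v : H) :
    Φ u + ⟪Φ' u, v - u⟫ ≤ Φ v := by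
  set w := v - u with hw
  have hc : ConvexOn ℝ Set.univ (fun t : ℝ => Φ (u + t • w)) := by
    refine ⟨convex_univ, ?_⟩
    intro a _ b _ p q hp hq hpq
    have := hΦ_convex.2 (Set.mem_univ (u + a • w)) (Set.mem_univ (u + b • w)) hp hq hpq
    have e : p • (u + a • w) + q • (u + b • w) = u + (p • a + q • b) • w := by
      calc _ = (p + q) • u + (p • a + q • b) • w := by
            simp only [smul_eq_mul]; module
        _ = _ := by rw [hpq, one_smul]
    rw [e] at this
    exact this
  have hd := hasDerivAt_line Φ Φ' hΦ_diff u w 0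
  have := hc.le_slope_of_hasDerivAt (Set.mem_univ 0) (Set.mem_univ 1) zero_lt_one hd
  simp only [slope_def_field, zero_smul, add_zero, one_smul, sub_zero, div_one] at this
  have hv : u + w = v := by rw [hw]; abel
  rw [hv] at this
  linarith

lemma prox_step (Ψ : H → EReal) (s : ℝ) (hs : 0 < s)
    (hΨ_ne_bot : ∀ u, Ψ u ≠ ⊥)
    (hΨ_convex : ∀ u v : H, ∀ a b : ℝ, 0 ≤ a → 0 ≤ b → a + b = 1 →
      Ψ (a • u + b • v) ≤ (a : EReal) * Ψ u + (b : EReal) * Ψ v)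
    (p w : H)
    (hp : ∀ u : H, Ψ p + ((1 / (2 * s) * ‖p - w‖ ^ 2 : ℝ) : EReal)
        ≤ Ψ u + ((1 / (2 * s) * ‖u - w‖ ^ 2 : ℝ) : EReal))
    (hpt : Ψ p ≠ ⊤) (u : H) (hu : Ψ u ≠ ⊤) :
    (Ψ p).toReal + 1 / (2 * s) * ‖p - w‖ ^ 2 + 1 / (2 * s) * ‖u - p‖ ^ 2
      ≤ (Ψ u).toReal + 1 / (2 * s) * ‖u - w‖ ^ 2 := by
  obtain ⟨a, ha⟩ : ∃ a : ℝ, Ψ p = a := ⟨_, (EReal.coe_toReal hpt (hΨ_ne_bot p)).symm⟩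
  obtain ⟨b, hb⟩ : ∃ b : ℝ, Ψ u = b := ⟨_, (EReal.coe_toReal hu (hΨ_ne_bot u)).symm⟩
  rw [ha, hb]
  simp only [EReal.toReal_coe]
  set c := 1 / (2 * s) with hc
  have key : ∀ t : ℝ, 0 < t → t < 1 →
      a + c * ‖p - w‖ ^ 2 + (1 - t) * (c * ‖u - p‖ ^ 2) ≤ b + c * ‖u - w‖ ^ 2 := by
    intro t ht0 ht1
    have h1 := hΨ_convex p u (1 - t) t (by linarith) ht0.le (by ring)
    have h2 := (hp ((1 - t) • p + t • u)).trans (add_le_add_left h1 _)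
    rw [ha, hb] at h2
    have h3 : a + c * ‖p - w‖ ^ 2
        ≤ (1 - t) * a + t * b + c * ‖(1 - t) • p + t • u - w‖ ^ 2 := by
      exact_mod_cast h2
    have h4 : ‖(1 - t) • p + t • u - w‖ ^ 2
        = (1 - t) * ‖p - w‖ ^ 2 + t * ‖u - w‖ ^ 2 - t * (1 - t) * ‖u - p‖ ^ 2 := by
      have e1 : (1 - t) • p + t • u - w = (p - w) + t • ((u - w) - (p - w)) := by module
      have e2 : u - p = (u - w) - (p - w) := by abel
      rw [e1, e2]
      generalize u - w = U
      generalize p - w = V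
      rw [norm_add_sq_real, norm_smul, mul_pow, inner_smul_right, inner_sub_right,
        norm_sub_sq_real, real_inner_self_eq_norm_sq, real_inner_comm, Real.norm_eq_abs, sq_abs]
      ring
    rw [h4] at h3
    have h5 : t * (a + c * ‖p - w‖ ^ 2 + (1 - t) * (c * ‖u - p‖ ^ 2))
        ≤ t * (b + c * ‖u - w‖ ^ 2) := by linarith
    exact le_of_mul_le_mul_left h5 ht0
  have hlim : Tendsto (fun t : ℝ => a + c * ‖p - w‖ ^ 2 + (1 - t) * (c * ‖u - p‖ ^ 2))
      (nhdsWithin 0 (Set.Ioi 0)) (nhds (a + c * ‖p - w‖ ^ 2 + (1 - 0) * (c * ‖u - p‖ ^ 2))) := by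
    apply Tendsto.mono_left _ nhdsWithin_le_nhds
    apply Continuous.tendsto (f := fun t : ℝ =>
      a + c * ‖p - w‖ ^ 2 + (1 - t) * (c * ‖u - p‖ ^ 2))
    fun_prop
  have := le_of_tendsto hlim (b := b + c * ‖u - w‖ ^ 2) (by
    filter_upwards [Ioo_mem_nhdsGT (zero_lt_one (α := ℝ))] with t ht
    exact key t ht.1 ht.2)
  linarith

lemma fb_step [CompleteSpace H] (Ψ : H → EReal) (Φ : H → ℝ) (Φ' : H → H) (L s : ℝ)
    (hL : 0 < L) (hs : 0 < s) (hsL : s * L ≤ 1)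
    (hΨ_ne_bot : ∀ u, Ψ u ≠ ⊥)
    (hΨ_convex : ∀ u v : H, ∀ a b : ℝ, 0 ≤ a → 0 ≤ b → a + b = 1 →
      Ψ (a • u + b • v) ≤ (a : EReal) * Ψ u + (b : EReal) * Ψ v)
    (hΦ_convex : ConvexOn ℝ Set.univ Φ)
    (hΦ_diff : ∀ u, HasGradientAt Φ (Φ' u) u)
    (hΦ_lip : LipschitzWith (Real.toNNReal L) Φ')
    (p y : H)
    (hp : ∀ u : H, Ψ p + ((1 / (2 * s) * ‖p - (y - s • Φ' y)‖ ^ 2 : ℝ) : EReal)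
        ≤ Ψ u + ((1 / (2 * s) * ‖u - (y - s • Φ' y)‖ ^ 2 : ℝ) : EReal))
    (hpt : Ψ p ≠ ⊤) (u : H) (hu : Ψ u ≠ ⊤) :
    2 * s * (((Ψ p).toReal + Φ p) - ((Ψ u).toReal + Φ u)) ≤ ‖y - u‖ ^ 2 - ‖p - u‖ ^ 2 := by
  have h1 := prox_step Ψ s hs hΨ_ne_bot hΨ_convex p _ hp hpt u hu
  have h2 := descent Φ Φ' L hL hΦ_diff hΦ_lip y p
  have h3 := convex_lower Φ Φ' hΦ_convex hΦ_diff y u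
  have ex : ∀ q : H, ‖q - (y - s • Φ' y)‖ ^ 2
      = ‖q - y‖ ^ 2 + 2 * s * ⟪Φ' y, q - y⟫ + s ^ 2 * ‖Φ' y‖ ^ 2 := by
    intro q
    have : q - (y - s • Φ' y) = (q - y) + s • Φ' y := by abel
    rw [this, norm_add_sq_real, inner_smul_right, norm_smul, mul_pow, Real.norm_eq_abs, sq_abs,
      real_inner_comm]
    ring
  rw [ex, ex] at h1
  rw [norm_sub_rev y u, norm_sub_rev p u]
  have h1' := mul_le_mul_of_nonneg_left h1 (show 0 ≤ 2 * s by positivity)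
  have e : ∀ r : ℝ, 2 * s * (1 / (2 * s) * r) = r := by
    intro r; field_simp
  simp only [mul_add (2 * s), e] at h1'
  have h2' := mul_le_mul_of_nonneg_left h2 (show 0 ≤ 2 * s by positivity)
  have h3' := mul_le_mul_of_nonneg_left h3 (show 0 ≤ 2 * s by positivity)
  have h4 := mul_le_mul_of_nonneg_right hsL (sq_nonneg ‖p - y‖)
  nlinarith

end FistaAux

/-- For every minimizer `x*` of `Ψ + Φ`, `lim ‖x_k - x*‖` exists. -/
theorem fista_anchor_limit_exists
    {H : Type*} [NormedAddCommGroup H] [InnerProductSpace ℝ H] [CompleteSpace H]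
    (Ψ : H → EReal) (Φ : H → ℝ) (Φ' : H → H) (L s α : ℝ)
    (hΨ_ne_bot : ∀ u, Ψ u ≠ ⊥) (hΨ_proper : ∃ u, Ψ u ≠ ⊤)
    (hΨ_lsc : LowerSemicontinuous Ψ)
    (hΨ_convex : ∀ u v : H, ∀ a b : ℝ, 0 ≤ a → 0 ≤ b → a + b = 1 →
      Ψ (a • u + b • v) ≤ (a : EReal) * Ψ u + (b : EReal) * Ψ v)
    (hΦ_convex : ConvexOn ℝ Set.univ Φ)
    (hΦ_diff : ∀ u, HasGradientAt Φ (Φ' u) u)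
    (hΦ_lip : LipschitzWith (Real.toNNReal L) Φ')
    (hα : 3 < α) (hs : 0 < s) (hsL : s < 1 / L)
    (x y : ℕ → H)
    (hy : ∀ k : ℕ, 1 ≤ k →
      y k = x k + (((k : ℝ) - 1) / ((k : ℝ) + α - 1)) • (x k - x (k - 1)))
    (hx : ∀ k : ℕ, 1 ≤ k → ∀ u : H,
      Ψ (x (k + 1)) + ((1 / (2 * s) * ‖x (k + 1) - (y k - s • Φ' (y k))‖ ^ 2 : ℝ) : EReal)
        ≤ Ψ u + ((1 / (2 * s) * ‖u - (y k - s • Φ' (y k))‖ ^ 2 : ℝ) : EReal))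
    (xstar : H)
    (hxstar : ∀ u, Ψ xstar + (Φ xstar : EReal) ≤ Ψ u + (Φ u : EReal)) :
    ∀ z : H, (∀ u, Ψ z + (Φ z : EReal) ≤ Ψ u + (Φ u : EReal)) →
      ∃ l : ℝ, Tendsto (fun k : ℕ => ‖x k - z‖) atTop (nhds l) := by
  intro z hz
  have hL : 0 < L := one_div_pos.1 (hs.trans hsL)
  have hsL' : s * L ≤ 1 := by
    rw [lt_div_iff₀ hL] at hsL
    exact hsL.le
  have fin_of : ∀ (a b : H) (c d : ℝ), Ψ a + (c : EReal) ≤ Ψ b + (d : EReal) →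
      Ψ b ≠ ⊤ → Ψ a ≠ ⊤ := by
    intro a b c d h hb ha
    rw [ha, EReal.top_add_coe, top_le_iff] at h
    exact EReal.add_ne_top hb (EReal.coe_ne_top d) h
  obtain ⟨u0, hu0⟩ := hΨ_proper
  have hzt : Ψ z ≠ ⊤ := fin_of _ _ _ _ (hz u0) hu0
  have hxt : ∀ n, Ψ (x (n + 2)) ≠ ⊤ := fun n =>
    fin_of _ _ _ _ (hx (n + 1) (by omega) u0) hu0
  have hmin : ∀ u, Ψ u ≠ ⊤ → (Ψ z).toReal + Φ z ≤ (Ψ u).toReal + Φ u := by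
    intro u hu
    have h := hz u
    rw [← EReal.coe_toReal hzt (hΨ_ne_bot z), ← EReal.coe_toReal hu (hΨ_ne_bot u)] at h
    exact_mod_cast h
  have step : ∀ n u, Ψ u ≠ ⊤ →
      2 * s * (((Ψ (x (n + 3))).toReal + Φ (x (n + 3))) - ((Ψ u).toReal + Φ u))
        ≤ ‖y (n + 2) - u‖ ^ 2 - ‖x (n + 3) - u‖ ^ 2 := fun n u hu =>
    FistaAux.fb_step Ψ Φ Φ' L s hL hs hsL' hΨ_ne_bot hΨ_convex hΦ_convex hΦ_diff hΦ_lip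
      (x (n + 3)) (y (n + 2)) (hx (n + 2) (by omega)) (hxt (n + 1)) u hu
  set g : ℕ → ℝ := fun n => ((n : ℝ) + 1) / ((n : ℝ) + 2 + (α - 1)) with hg
  have hyn : ∀ n, y (n + 2) = x (n + 2) + g n • (x (n + 2) - x (n + 1)) := by
    intro n
    have := hy (n + 2) (by omega)
    rw [this, hg]
    have e1 : n + 2 - 1 = n + 1 := by omega
    have e2 : ((n + 2 : ℕ) : ℝ) - 1 = n + 1 := by push_cast; ring
    have e3 : ((n + 2 : ℕ) : ℝ) + α - 1 = n + 2 + (α - 1) := by push_cast; ring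
    rw [e1, e2, e3]
  have core : ∃ l, Tendsto (fun n => ‖x (n + 2) - z‖ ^ 2) atTop (nhds l) := by
    refine FistaAux.scalar_core (α - 1) (by linarith) (fun n => ‖x (n + 2) - z‖ ^ 2)
      (fun n => ‖x (n + 2) - x (n + 1)‖ ^ 2)
      (fun n => ⟪x (n + 2) - z, x (n + 2) - x (n + 1)⟫)
      (fun n => 2 * s * (((Ψ (x (n + 2))).toReal + Φ (x (n + 2))) - ((Ψ z).toReal + Φ z)))
      (fun n => sq_nonneg _) (fun n => sq_nonneg _) ?_ ?_ ?_ g ?_ ?_ ?_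
    · intro n
      have := hmin _ (hxt n)
      exact mul_nonneg (by positivity) (by linarith)
    · intro n
      have h := sq_nonneg ‖(α - 1) • (x (n + 2) - z) + ((n : ℝ) + 1) • (x (n + 2) - x (n + 1))‖
      rw [norm_add_sq_real, norm_smul, norm_smul, inner_smul_left, inner_smul_right, mul_pow,
        mul_pow, Real.norm_eq_abs, Real.norm_eq_abs, sq_abs, sq_abs] at h
      simp only [conj_trivial] at h
      linarith
    · intro n
      have e : x (n + 2) - z = (x (n + 1 + 2) - z) - (x (n + 1 + 2) - x (n + 1 + 1)) := by
        abel
      rw [e, norm_sub_sq_real (x (n + 1 + 2) - z) (x (n + 1 + 2) - x (n + 1 + 1))]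
      ring
    · intro n
      have : (0:ℝ) < (n : ℝ) + 2 + (α - 1) := by
        have : (0:ℝ) ≤ n := by positivity
        linarith
      simp only [hg]
      field_simp
    · intro n
      have h := step n _ (hxt n)
      have e : y (n + 2) - x (n + 2) = g n • (x (n + 2) - x (n + 1)) := by
        rw [hyn]; abel
      rw [e, norm_smul, mul_pow, Real.norm_eq_abs, sq_abs] at h
      show 2 * s * (((Ψ (x (n + 3))).toReal + Φ (x (n + 3))) - ((Ψ z).toReal + Φ z)) ≤
        2 * s * (((Ψ (x (n + 2))).toReal + Φ (x (n + 2))) - ((Ψ z).toReal + Φ z))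
        + g n ^ 2 * ‖x (n + 2) - x (n + 1)‖ ^ 2 - ‖x (n + 3) - x (n + 2)‖ ^ 2
      linarith
    · intro n
      have h := step n _ hzt
      have e : y (n + 2) - z = (x (n + 2) - z) + g n • (x (n + 2) - x (n + 1)) := by
        rw [hyn]; abel
      rw [e, norm_add_sq_real, norm_smul, mul_pow, Real.norm_eq_abs, sq_abs,
        inner_smul_right] at h
      show 2 * s * (((Ψ (x (n + 3))).toReal + Φ (x (n + 3))) - ((Ψ z).toReal + Φ z)) ≤
        ‖x (n + 2) - z‖ ^ 2 + 2 * g n * ⟪x (n + 2) - z, x (n + 2) - x (n + 1)⟫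
        + g n ^ 2 * ‖x (n + 2) - x (n + 1)‖ ^ 2 - ‖x (n + 3) - z‖ ^ 2
      linarith
  obtain ⟨l, hl⟩ := core
  refine ⟨Real.sqrt l, ?_⟩
  rw [← tendsto_add_atTop_iff_nat 2]
  refine ((Real.continuous_sqrt.tendsto l).comp hl).congr ?_
  intro n
  simp [Real.sqrt_sq (norm_nonneg _)]
end
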